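/- arXiv:2409.05798 — 2 statements merged into one kernel-verified Lean document; each statement's English description precedes it below -/
import Mathlib

section
/- For all real u ≠ 0 and a > 0, the quantity V(u) = (a/u³)·(exp(4au) - 1 - 4au·exp(2au))/(exp(2au)+1)² is strictly positive, and its limit as u → 0 equals 2a⁴/3. -/
open Filter

/-!
Dividing numerator and denominator of `V(u)` by `4 * exp (2au)` turns it into
`(a / 2) * ((sinh (2au) - 2au) / u ^ 3) / cosh (au) ^ 2`. Since `sinh x - x` has the sign of `x`,
this is positive, and since `sinh x - x = x ^ 3 / 6 + o(x ^ 3)` it tends to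
`(a / 2) * ((2a) ^ 3 / 6)`.
-/

open Asymptotics Topology

theorem mul_sinh_sub_self_pos {x : ℝ} (hx : x ≠ 0) : 0 < x * (Real.sinh x - x) := by
  rcases hx.lt_or_gt with hneg | hpos
  · exact mul_pos_of_neg_of_neg hneg (sub_neg.2 (Real.sinh_lt_self_iff.2 hneg))
  · exact mul_pos hpos (sub_pos.2 (Real.self_lt_sinh_iff.2 hpos))

theorem isLittleO_sinh_sub_cubic :
    (fun x : ℝ ↦ Real.sinh x - (x + x ^ 3 / 6)) =o[𝓝 0] fun x ↦ x ^ 3 := by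
  have exp_taylor := Real.exp_sub_sum_range_succ_isLittleO_pow 3
  have exp_neg_taylor := exp_taylor.comp_tendsto (continuous_neg.tendsto' (0 : ℝ) 0 neg_zero)
  have cube_neg : (fun x : ℝ ↦ x ^ 3) ∘ Neg.neg = fun x ↦ -x ^ 3 :=
    funext fun x ↦ Odd.neg_pow (by decide) x
  rw [cube_neg, isLittleO_neg_right] at exp_neg_taylor
  refine ((exp_taylor.sub exp_neg_taylor).const_mul_left (1 / 2)).congr_left fun x ↦ ?_
  simp only [Function.comp_apply, Finset.sum_range_succ, Finset.sum_range_zero, Nat.factorial,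
    Real.sinh_eq]
  push_cast
  ring

theorem tendsto_sinh_mul_sub_div_pow_three (c : ℝ) :
    Tendsto (fun u : ℝ ↦ (Real.sinh (c * u) - c * u) / u ^ 3) (𝓝[≠] 0) (𝓝 (c ^ 3 / 6)) := by
  have mul_tendsto : Tendsto (fun u : ℝ ↦ c * u) (𝓝 0) (𝓝 0) :=
    (continuous_const_mul c).tendsto' 0 0 (mul_zero c)
  have cube_isBigO : (fun u : ℝ ↦ (c * u) ^ 3) =O[𝓝 0] fun u ↦ u ^ 3 :=
    (isBigO_const_mul_self c (fun u : ℝ ↦ u) (𝓝 0)).pow 3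
  have remainder_tendsto :=
    ((isLittleO_sinh_sub_cubic.comp_tendsto mul_tendsto).trans_isBigO
      cube_isBigO).tendsto_div_nhds_zero.mono_left (nhdsWithin_le_nhds (s := {0}ᶜ))
  have sum_tendsto := remainder_tendsto.add_const (c ^ 3 / 6)
  rw [zero_add] at sum_tendsto
  refine sum_tendsto.congr' ?_
  filter_upwards [self_mem_nhdsWithin] with u (hu : u ≠ 0)
  simp only [Function.comp_apply]
  field_simp
  ring

theorem exp_four_mul_sub_eq_sinh (y : ℝ) :
    Real.exp (4 * y) - 1 - 4 * y * Real.exp (2 * y) =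
      2 * Real.exp (2 * y) * (Real.sinh (2 * y) - 2 * y) := by
  have exp_four_mul : Real.exp (4 * y) = Real.exp (2 * y) * Real.exp (2 * y) := by
    rw [← Real.exp_add]
    ring_nf
  have exp_mul_exp_neg : Real.exp (2 * y) * Real.exp (-(2 * y)) = 1 := by
    rw [← Real.exp_add, add_neg_cancel, Real.exp_zero]
  rw [exp_four_mul, Real.sinh_eq]
  linear_combination exp_mul_exp_neg

theorem exp_two_mul_add_one_sq_eq_cosh (y : ℝ) :
    (Real.exp (2 * y) + 1) ^ 2 = 4 * Real.exp (2 * y) * Real.cosh y ^ 2 := by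
  have exp_two_mul : Real.exp (2 * y) = Real.exp y ^ 2 := by
    rw [two_mul, Real.exp_add, sq]
  rw [exp_two_mul, Real.cosh_eq, Real.exp_neg]
  field_simp
  norm_num

/-- The variance `V(u)` of the decision time in the EZ diffusion model with barrier `a` and
drift `u`. At `u = 0` division by zero makes it `0`, which is not the limiting variance. -/
noncomputable def decisionTimeVariance (a u : ℝ) : ℝ :=
  (a / u ^ 3) * (Real.exp (4 * a * u) - 1 - 4 * a * u * Real.exp (2 * a * u)) /
    (Real.exp (2 * a * u) + 1) ^ 2

theorem decisionTimeVariance_eq_sinh_div_cosh (a u : ℝ) :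
    decisionTimeVariance a u =
      a / 2 * ((Real.sinh (2 * a * u) - 2 * a * u) / u ^ 3) / Real.cosh (a * u) ^ 2 := by
  have cosh_ne_zero : Real.cosh (a * u) ≠ 0 := (Real.cosh_pos _).ne'
  simp only [decisionTimeVariance, mul_assoc _ a u]
  rw [exp_four_mul_sub_eq_sinh, exp_two_mul_add_one_sq_eq_cosh]
  field_simp
  ring

theorem decisionTimeVariance_pos {a u : ℝ} (ha : a ≠ 0) (hu : u ≠ 0) :
    0 < decisionTimeVariance a u := by
  have sinh_pos : 0 < 2 * a * u * (Real.sinh (2 * a * u) - 2 * a * u) :=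
    mul_sinh_sub_self_pos (mul_ne_zero (mul_ne_zero two_ne_zero ha) hu)
  calc
    0 < 2 * a * u * (Real.sinh (2 * a * u) - 2 * a * u) / (4 * u ^ 4 * Real.cosh (a * u) ^ 2) :=
      div_pos sinh_pos (by positivity)
    _ = decisionTimeVariance a u := by
      rw [decisionTimeVariance_eq_sinh_div_cosh]
      field_simp
      ring

theorem tendsto_decisionTimeVariance (a : ℝ) :
    Tendsto (decisionTimeVariance a) (𝓝[≠] 0) (𝓝 (2 * a ^ 4 / 3)) := by
  have cosh_sq_tendsto : Tendsto (fun u : ℝ ↦ Real.cosh (a * u) ^ 2) (𝓝[≠] 0) (𝓝 1) :=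
    (Continuous.tendsto' (by fun_prop) 0 1 (by simp)).mono_left nhdsWithin_le_nhds
  have limit_eq : a / 2 * ((2 * a) ^ 3 / 6) / 1 = 2 * a ^ 4 / 3 := by ring
  rw [← limit_eq, funext (decisionTimeVariance_eq_sinh_div_cosh a)]
  exact ((tendsto_sinh_mul_sub_div_pow_three (2 * a)).const_mul (a / 2)).div cosh_sq_tendsto
    one_ne_zero

theorem stmt_7 (a : ℝ) (ha : 0 < a) :
    (∀ u : ℝ, u ≠ 0 →
      0 < (a / u ^ 3) * (Real.exp (4 * a * u) - 1 - 4 * a * u * Real.exp (2 * a * u)) /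
        (Real.exp (2 * a * u) + 1) ^ 2) ∧
    Tendsto (fun u : ℝ =>
        (a / u ^ 3) * (Real.exp (4 * a * u) - 1 - 4 * a * u * Real.exp (2 * a * u)) /
          (Real.exp (2 * a * u) + 1) ^ 2)
      (nhdsWithin 0 {0}ᶜ) (nhds (2 * a ^ 4 / 3)) :=
  ⟨fun _ hu ↦ decisionTimeVariance_pos ha.ne' hu, tendsto_decisionTimeVariance a⟩
end

section
/- For all real y, the function g(y) = (1 − exp(2y) + 2y·exp(y))/(1 + exp(y))² satisfies: g(y) < 0 for y > 0, g(y) > 0 for y < 0, and g(0) = 0. -/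
/-!
Factoring `2 * exp y` out of both the numerator and the denominator turns the expression into
`(y - sinh y) / (1 + cosh y)`. The denominator is positive, so the sign is that of `y - sinh y`.
-/

open Real

/-- The function `g` in the variance `V[t] = (a / u ^ 3) * g (-2 * a * u)` of the decision time of
the EZ diffusion model. -/
noncomputable def ezVarianceFactor (y : ℝ) : ℝ :=
  (1 - exp (2 * y) + 2 * y * exp y) / (1 + exp y) ^ 2

theorem exp_two_mul_sub_one (y : ℝ) : exp (2 * y) - 1 = 2 * exp y * sinh y := by
  rw [two_mul, exp_add, ← cosh_add_sinh]
  linear_combination cosh_sq y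

theorem one_add_exp_sq (y : ℝ) : (1 + exp y) ^ 2 = 2 * exp y * (1 + cosh y) := by
  rw [← cosh_add_sinh]
  linear_combination -cosh_sq y

theorem one_add_cosh_pos (y : ℝ) : 0 < 1 + cosh y :=
  add_pos one_pos (cosh_pos y)

namespace ezVarianceFactor

theorem eq_sub_sinh_div_one_add_cosh (y : ℝ) :
    ezVarianceFactor y = (y - sinh y) / (1 + cosh y) := by
  have numerator_eq : 1 - exp (2 * y) + 2 * y * exp y = 2 * exp y * (y - sinh y) := by
    linear_combination -exp_two_mul_sub_one y
  rw [ezVarianceFactor, numerator_eq, one_add_exp_sq, mul_div_mul_left _ _ (by positivity)]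

theorem neg_iff {y : ℝ} : ezVarianceFactor y < 0 ↔ 0 < y := by
  rw [eq_sub_sinh_div_one_add_cosh, div_lt_iff₀ (one_add_cosh_pos y), zero_mul, sub_neg,
    self_lt_sinh_iff]

theorem pos_iff {y : ℝ} : 0 < ezVarianceFactor y ↔ y < 0 := by
  rw [eq_sub_sinh_div_one_add_cosh, div_pos_iff_of_pos_right (one_add_cosh_pos y), sub_pos,
    sinh_lt_self_iff]

theorem map_zero : ezVarianceFactor 0 = 0 := by
  rw [eq_sub_sinh_div_one_add_cosh, sinh_zero, sub_zero, zero_div]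

end ezVarianceFactor

theorem stmt_18 :
    (∀ y : ℝ, 0 < y →
      (1 - Real.exp (2 * y) + 2 * y * Real.exp y) / (1 + Real.exp y) ^ 2 < 0) ∧
    (∀ y : ℝ, y < 0 →
      0 < (1 - Real.exp (2 * y) + 2 * y * Real.exp y) / (1 + Real.exp y) ^ 2) ∧
    (1 - Real.exp (2 * 0) + 2 * 0 * Real.exp 0) / (1 + Real.exp 0) ^ 2 = 0 :=
  ⟨fun _ hy => ezVarianceFactor.neg_iff.2 hy, fun _ hy => ezVarianceFactor.pos_iff.2 hy,
    ezVarianceFactor.map_zero⟩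
end
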